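/- arXiv:0711.0237 — 4 statements merged into one kernel-verified Lean document; each statement's English description precedes it below -/
import Mathlib

section
/- For all p, q ∈ [0,1], the binary entropy function satisfies |h_b(p) − h_b(q)| ≤ h_b(|p−q|). -/
/-- The binary entropy function `h_b(x) = −x·log₂ x − (1−x)·log₂(1−x)`,
with the convention `0 · log₂ 0 = 0` (in Lean, `Real.logb 2 0 = 0`). -/
noncomputable def binEnt (x : ℝ) : ℝ :=
  -(x * Real.logb 2 x) - (1 - x) * Real.logb 2 (1 - x)

theorem binEnt_eq_div (x : ℝ) : binEnt x = Real.binEntropy x / Real.log 2 := by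
  unfold binEnt Real.binEntropy Real.logb
  rw [Real.log_inv, Real.log_inv]
  ring

theorem binEntropy_scale (a s : ℝ) (ha : 0 ≤ a) (has : a ≤ s) (hs : 0 < s) (hs1 : s ≤ 1) :
    a / s * Real.binEntropy s ≤ Real.binEntropy a := by
  have h0 : (0 : ℝ) ∈ Set.Icc (0 : ℝ) 1 := by simp
  have hsm : s ∈ Set.Icc (0 : ℝ) 1 := ⟨hs.le, hs1⟩
  have t0 : 0 ≤ 1 - a / s := by rw [sub_nonneg]; exact (div_le_one hs).2 has
  have t1 : 0 ≤ a / s := by positivity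
  have h := Real.strictConcave_binEntropy.concaveOn.2 h0 hsm t0 t1 (by ring)
  have e : a / s * s = a := by field_simp
  simpa [e] using h

theorem binEntropy_add_le (a d : ℝ) (ha : 0 ≤ a) (hd : 0 ≤ d) (h1 : a + d ≤ 1) :
    Real.binEntropy (a + d) ≤ Real.binEntropy a + Real.binEntropy d := by
  rcases (add_nonneg ha hd).eq_or_lt with h | h
  · have h1 : a = 0 := by linarith
    have h2 : d = 0 := by linarith
    simp [h1, h2]
  · have e1 := binEntropy_scale a (a + d) ha (by linarith) h h1
    have e2 := binEntropy_scale d (a + d) hd (by linarith) h h1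
    have e3 : a / (a + d) * Real.binEntropy (a + d) + d / (a + d) * Real.binEntropy (a + d)
        = Real.binEntropy (a + d) := by field_simp
    linarith

theorem abs_binEntropy_sub_le_aux (p q : ℝ) (hq : 0 ≤ q) (hp : p ≤ 1) (h : q ≤ p) :
    |Real.binEntropy p - Real.binEntropy q| ≤ Real.binEntropy |p - q| := by
  rw [abs_of_nonneg (sub_nonneg.2 h)]
  have e1 := binEntropy_add_le q (p - q) hq (by linarith) (by linarith)
  have e2 := binEntropy_add_le (1 - p) (p - q) (by linarith) (by linarith) (by linarith)
  rw [show q + (p - q) = p by ring] at e1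
  rw [show 1 - p + (p - q) = 1 - q by ring, Real.binEntropy_one_sub, Real.binEntropy_one_sub] at e2
  rw [abs_le]
  constructor <;> linarith

/-- For all `p, q ∈ [0,1]`, `|h_b(p) − h_b(q)| ≤ h_b(|p−q|)`. -/
theorem abs_binEnt_sub_le (p q : ℝ)
    (hp : p ∈ Set.Icc (0 : ℝ) 1) (hq : q ∈ Set.Icc (0 : ℝ) 1) :
    |binEnt p - binEnt q| ≤ binEnt |p - q| := by
  have hl : 0 < Real.log 2 := Real.log_pos (by norm_num)
  rw [binEnt_eq_div, binEnt_eq_div, binEnt_eq_div, ← sub_div, abs_div, abs_of_pos hl]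
  apply div_le_div_of_nonneg_right _ hl.le
  rcases le_total q p with h | h
  · exact abs_binEntropy_sub_le_aux p q hq.1 hp.2 h
  · rw [abs_sub_comm, abs_sub_comm p q]
    exact abs_binEntropy_sub_le_aux q p hp.1 hq.2 h
end

section
/- Let P and Q be two probability distributions on a finite set S with |S| ≥ 2, and let 0 ≤ ε ≤ 1/2. If |P(s) − Q(s)| ≤ ε for every s ∈ S, then |H(P) − H(Q)| ≤ (|S|−1)·h_b(ε) + (|S|−1)·log₂(|S|−1)·ε. -/
open Finset

/-- The Shannon entropy `H(P) = −∑_{s∈S} P(s)·log₂ P(s)` of a distribution on a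
finite set, with the convention `0 · log₂ 0 = 0`. -/
noncomputable def shannonEntropy {S : Type*} [Fintype S] (P : S → ℝ) : ℝ :=
  -∑ s, P s * Real.logb 2 (P s)

lemma aux_up {q d : ℝ} (hq : 0 ≤ q) (hd : 0 ≤ d) :
    Real.negMulLog (q + d) - Real.negMulLog q ≤ Real.negMulLog d := by
  rcases hq.eq_or_lt with rfl | hq'
  · simp
  rcases hd.eq_or_lt with rfl | hd'
  · simp
  have h1 := Real.log_le_log hq' (by linarith : q ≤ q + d)
  have h2 := Real.log_le_log hd' (by linarith : d ≤ q + d)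
  simp only [Real.negMulLog]
  nlinarith [mul_le_mul_of_nonneg_left h1 hq, mul_le_mul_of_nonneg_left h2 hd]

lemma aux_down {q d : ℝ} (hq : 0 ≤ q) (hd : 0 ≤ d) (h1 : q + d ≤ 1) :
    Real.negMulLog q - Real.negMulLog (q + d) ≤ Real.negMulLog (1 - d) := by
  rcases (show q ≤ 1 by linarith).eq_or_lt with rfl | hq1
  · have : d = 0 := by linarith
    subst this
    simp
  have hpos : 0 < 1 - q := by linarith
  have hc := Real.concaveOn_negMulLog
  have hl0 : 0 ≤ (1 - q - d) / (1 - q) := div_nonneg (by linarith) hpos.le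
  have hm0 : 0 ≤ d / (1 - q) := div_nonneg hd hpos.le
  have hs : (1 - q - d) / (1 - q) + d / (1 - q) = 1 := by field_simp; ring
  have a1 := hc.2 (Set.mem_Ici.2 hq) (Set.mem_Ici.2 zero_le_one) hl0 hm0 hs
  have a2 := hc.2 (Set.mem_Ici.2 hq) (Set.mem_Ici.2 zero_le_one) hm0 hl0
    (by rw [add_comm]; exact hs)
  simp only [smul_eq_mul, Real.negMulLog_one, mul_zero, add_zero, mul_one] at a1 a2
  have e1 : (1 - q - d) / (1 - q) * q + d / (1 - q) = q + d := by field_simp; ring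
  have e2 : d / (1 - q) * q + (1 - q - d) / (1 - q) = 1 - d := by field_simp; ring
  rw [e1] at a1
  rw [e2] at a2
  have : (1 - q - d) / (1 - q) * Real.negMulLog q + d / (1 - q) * Real.negMulLog q
      = Real.negMulLog q := by rw [← add_mul, hs, one_mul]
  linarith

lemma aux_le {d : ℝ} (hd : d < 1) : Real.negMulLog (1 - d) ≤ d := by
  have hp : 0 < 1 - d := by linarith
  have h := mul_le_mul_of_nonneg_left (Real.one_sub_inv_le_log_of_pos hp) hp.le
  have : (1 - d) * (1 - (1 - d)⁻¹) = - d := by field_simp; ring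
  rw [this] at h
  simp only [Real.negMulLog]
  linarith

lemma aux_bin {d ε : ℝ} (hd : 0 ≤ d) (hde : d ≤ ε) (hε : ε ≤ 1 / 2) :
    Real.negMulLog d + Real.negMulLog (1 - d) ≤ Real.binEntropy ε := by
  rw [← Real.binEntropy_eq_negMulLog_add_negMulLog_one_sub]
  exact Real.binEntropy_strictMonoOn.monotoneOn ⟨hd, by norm_num; linarith⟩
    ⟨by linarith, by norm_num; linarith⟩ hde

lemma aux_main {S : Type*} [Fintype S]
    (hS : 2 ≤ Fintype.card S)
    (P Q : S → ℝ)
    (hP0 : ∀ s, 0 ≤ P s) (hP1 : ∑ s, P s = 1)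
    (hQ0 : ∀ s, 0 ≤ Q s) (hQ1 : ∑ s, Q s = 1)
    (ε : ℝ) (hε0 : 0 ≤ ε) (hε1 : ε ≤ 1 / 2)
    (hclose : ∀ s, |P s - Q s| ≤ ε) :
    ∑ s, Real.negMulLog (P s) - ∑ s, Real.negMulLog (Q s) ≤
      ((Fintype.card S : ℝ) - 1) * Real.binEntropy ε +
        ((Fintype.card S : ℝ) - 1) * Real.log ((Fintype.card S : ℝ) - 1) * ε := by
  classical
  have hQle : ∀ s, Q s ≤ 1 := fun s => by
    rw [← hQ1]; exact Finset.single_le_sum (fun i _ => hQ0 i) (Finset.mem_univ s)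
  have up : ∀ s, Q s ≤ P s →
      Real.negMulLog (P s) - Real.negMulLog (Q s) ≤ Real.negMulLog (P s - Q s) := by
    intro s h
    have := aux_up (hQ0 s) (sub_nonneg.2 h)
    rwa [add_sub_cancel] at this
  have down : ∀ s, P s ≤ Q s →
      Real.negMulLog (P s) - Real.negMulLog (Q s) ≤ Real.negMulLog (1 - (Q s - P s)) := by
    intro s h
    have := aux_down (hP0 s) (sub_nonneg.2 h) (by have := hQle s; linarith)
    rwa [add_sub_cancel] at this
  have each : ∀ s, Real.negMulLog (P s) - Real.negMulLog (Q s) ≤ Real.binEntropy ε := by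
    intro s
    have hc := abs_le.1 (hclose s)
    rcases le_total (Q s) (P s) with h | h
    · have h1 := aux_bin (sub_nonneg.2 h) hc.2 hε1
      have h2 := Real.negMulLog_nonneg (x := 1 - (P s - Q s)) (by linarith) (by linarith)
      linarith [up s h]
    · have h1 := aux_bin (sub_nonneg.2 h) (by linarith) hε1
      have h2 := Real.negMulLog_nonneg (x := Q s - P s) (by linarith) (by linarith)
      linarith [down s h]
  obtain ⟨s0, -, hs0⟩ : ∃ s ∈ (Finset.univ : Finset S), P s ≤ Q s := by
    apply Finset.exists_le_of_sum_le
    · rw [← Finset.card_pos, Finset.card_univ]; omega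
    · rw [hP1, hQ1]
  have hc0 := abs_le.1 (hclose s0)
  rw [← Finset.sum_sub_distrib, ← Finset.add_sum_erase _ _ (Finset.mem_univ s0)]
  have hcard : (Finset.univ.erase s0).card = Fintype.card S - 1 := by
    rw [Finset.card_erase_of_mem (Finset.mem_univ s0), Finset.card_univ]
  rcases hS.eq_or_lt with h2 | h3
  · rw [← h2] at hcard
    obtain ⟨s1, hs1⟩ := Finset.card_eq_one.1 (show (Finset.univ.erase s0).card = 1 by omega)
    have eP := hP1
    have eQ := hQ1
    rw [← Finset.add_sum_erase _ _ (Finset.mem_univ s0), hs1, Finset.sum_singleton] at eP eQ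
    rw [hs1, Finset.sum_singleton, ← h2]
    have hu := up s1 (by linarith)
    rw [show P s1 - Q s1 = Q s0 - P s0 by linarith] at hu
    have h1 := aux_bin (sub_nonneg.2 hs0) (by linarith) hε1
    have hd := down s0 hs0
    have e : (((2 : ℕ) : ℝ) - 1) = 1 := by norm_num
    rw [e, Real.log_one]
    linarith
  · have hsum := Finset.sum_le_card_nsmul (Finset.univ.erase s0)
      (fun s => Real.negMulLog (P s) - Real.negMulLog (Q s)) _ (fun s _ => each s)
    rw [hcard, nsmul_eq_mul, Nat.cast_sub (by omega), Nat.cast_one] at hsum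
    have hn : (2 : ℝ) ≤ (Fintype.card S : ℝ) - 1 := by
      have : (3 : ℝ) ≤ (Fintype.card S : ℝ) := by exact_mod_cast h3
      linarith
    have hl : Real.log 2 ≤ Real.log ((Fintype.card S : ℝ) - 1) :=
      Real.log_le_log (by norm_num) hn
    have hl2 := Real.log_two_gt_d9
    have hmul : 1 ≤ ((Fintype.card S : ℝ) - 1) * Real.log ((Fintype.card S : ℝ) - 1) := by
      nlinarith
    have hfin := mul_le_mul_of_nonneg_right hmul hε0
    have hd := down s0 hs0
    have hd' := aux_le (d := Q s0 - P s0) (by linarith)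
    linarith

/-- If two probability distributions `P, Q` on a finite set `S` with
`|S| ≥ 2` satisfy `|P(s) − Q(s)| ≤ ε` for all `s`, where `0 ≤ ε ≤ 1/2`, then
`|H(P) − H(Q)| ≤ (|S|−1)·h_b(ε) + (|S|−1)·log₂(|S|−1)·ε`. -/
theorem entropy_diff_le_of_close {S : Type*} [Fintype S]
    (hS : 2 ≤ Fintype.card S)
    (P Q : S → ℝ)
    (hP0 : ∀ s, 0 ≤ P s) (hP1 : ∑ s, P s = 1)
    (hQ0 : ∀ s, 0 ≤ Q s) (hQ1 : ∑ s, Q s = 1)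
    (ε : ℝ) (hε0 : 0 ≤ ε) (hε1 : ε ≤ 1 / 2)
    (hclose : ∀ s, |P s - Q s| ≤ ε) :
    |shannonEntropy P - shannonEntropy Q| ≤
      ((Fintype.card S : ℝ) - 1) * binEnt ε +
        ((Fintype.card S : ℝ) - 1) * Real.logb 2 ((Fintype.card S : ℝ) - 1) * ε := by
  have hH : ∀ R : S → ℝ, shannonEntropy R = (∑ s, Real.negMulLog (R s)) / Real.log 2 := by
    intro R
    simp only [shannonEntropy, Real.negMulLog, Real.logb, Finset.sum_div,
      ← Finset.sum_neg_distrib]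
    refine Finset.sum_congr rfl fun s _ => ?_
    ring
  have hB : binEnt ε = Real.binEntropy ε / Real.log 2 := by
    rw [Real.binEntropy_eq_negMulLog_add_negMulLog_one_sub]
    simp only [binEnt, Real.negMulLog, Real.logb]
    ring
  have hlog : 0 < Real.log 2 := Real.log_pos (by norm_num)
  have hR : ((Fintype.card S : ℝ) - 1) * binEnt ε +
        ((Fintype.card S : ℝ) - 1) * Real.logb 2 ((Fintype.card S : ℝ) - 1) * ε =
      (((Fintype.card S : ℝ) - 1) * Real.binEntropy ε +
        ((Fintype.card S : ℝ) - 1) * Real.log ((Fintype.card S : ℝ) - 1) * ε) / Real.log 2 := by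
    rw [hB, Real.logb]
    ring
  rw [hR, hH, hH, ← sub_div, abs_div, abs_of_pos hlog]
  refine div_le_div_of_nonneg_right ?_ hlog.le
  rw [abs_sub_le_iff]
  exact ⟨aux_main hS P Q hP0 hP1 hQ0 hQ1 ε hε0 hε1 hclose,
    aux_main hS Q P hQ0 hQ1 hP0 hP1 ε hε0 hε1 fun s => by
      rw [abs_sub_comm]; exact hclose s⟩
end

section
/- Let W(y|x) and V(y|x) be two channels with finite input alphabet X and finite output alphabet Y with |Y| ≥ 2 (i.e., for each x ∈ X, W(·|x) and V(·|x) are probability distributions on Y), and let 0 ≤ ε ≤ 1/2. If |W(y|x) − V(y|x)| ≤ ε for all (x,y) ∈ X × Y, then for every probability distribution P on X, |I(P,W) − I(P,V)| ≤ 2(|Y|−1)·h_b(ε) + 2(|Y|−1)·log₂(|Y|−1)·ε. -/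
open Finset

/-- The mutual information
`I(P,W) = ∑_x ∑_y P(x)·W(y|x)·log₂( W(y|x) / ∑_{x'} P(x')·W(y|x') )`,
with the convention that terms with `P(x)·W(y|x) = 0` are zero (automatic here,
since such terms are a product with the factor `P x * W x y = 0`). -/
noncomputable def mutualInfo {X Y : Type*} [Fintype X] [Fintype Y]
    (P : X → ℝ) (W : X → Y → ℝ) : ℝ :=
  ∑ x, ∑ y, P x * W x y * Real.logb 2 (W x y / ∑ x', P x' * W x' y)

lemma aux_pos (q d : ℝ) (hq : 0 ≤ q) (hd : 0 ≤ d) :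
    Real.negMulLog (q + d) ≤ Real.negMulLog q + Real.negMulLog d := by
  have key : ∀ a b : ℝ, 0 ≤ a → 0 ≤ b → a * Real.log a ≤ a * Real.log (a + b) := by
    intro a b ha hb
    rcases ha.eq_or_lt with h | h
    · simp [← h]
    · exact mul_le_mul_of_nonneg_left (Real.log_le_log h (by linarith)) ha
  have h1 := key q d hq hd
  have h2 := key d q hd hq
  rw [add_comm d q] at h2
  unfold Real.negMulLog
  linarith

lemma aux_neg (p d : ℝ) (hp : 0 ≤ p) (hd : 0 ≤ d) (h : p + d ≤ 1) :
    Real.negMulLog p ≤ Real.negMulLog (p + d) + Real.negMulLog (1 - d) := by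
  rcases eq_or_lt_of_le (show p ≤ 1 by linarith) with h1 | h1
  · have : d = 0 := by linarith
    subst this; simp
  · have hc := Real.concaveOn_negMulLog
    have hpos : 0 < 1 - p := by linarith
    set t := d / (1 - p) with ht
    have htd : t * (1 - p) = d := by rw [ht]; field_simp
    have ht0 : 0 ≤ t := by positivity
    have ht1 : t ≤ 1 := by rw [ht, div_le_one hpos]; linarith
    have e1 := hc.2 (Set.mem_Ici.2 hp) (Set.mem_Ici.2 zero_le_one)
      (show 0 ≤ 1 - t by linarith) ht0 (by ring)
    have e2 := hc.2 (Set.mem_Ici.2 hp) (Set.mem_Ici.2 zero_le_one)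
      ht0 (show 0 ≤ 1 - t by linarith) (by ring)
    simp only [smul_eq_mul, Real.negMulLog_one] at e1 e2
    rw [show (1 - t) * p + t * 1 = p + d by rw [← htd]; ring] at e1
    rw [show t * p + (1 - t) * 1 = 1 - d by rw [← htd]; ring] at e2
    linarith

lemma aux_lin (d : ℝ) (hd : d < 1) : Real.negMulLog (1 - d) ≤ d := by
  have h0 : 0 < 1 - d := by linarith
  have h := Real.one_sub_inv_le_log_of_pos h0
  have h2 := mul_le_mul_of_nonneg_left h h0.le
  rw [mul_sub, mul_inv_cancel₀ h0.ne'] at h2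
  unfold Real.negMulLog
  linarith

lemma aux_mono (d ε : ℝ) (hd : 0 ≤ d) (hdε : d ≤ ε) (hε : ε ≤ 1 / 2) :
    Real.negMulLog d + Real.negMulLog (1 - d) ≤ Real.binEntropy ε := by
  rw [← Real.binEntropy_eq_negMulLog_add_negMulLog_one_sub]
  exact Real.binEntropy_strictMonoOn.monotoneOn ⟨hd, by norm_num at *; linarith⟩
    ⟨by linarith, by norm_num at *; linarith⟩ hdε

lemma aux_term (p q ε : ℝ) (hp : 0 ≤ p) (hq : 0 ≤ q) (hp1 : p ≤ 1) (hq1 : q ≤ 1)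
    (hε : ε ≤ 1 / 2) (h : |p - q| ≤ ε) :
    Real.negMulLog p - Real.negMulLog q ≤ Real.binEntropy ε := by
  have h' := abs_le.1 h
  rcases le_total p q with hpq | hpq
  · have h1 := aux_neg p (q - p) hp (by linarith) (by linarith)
    have h2 := aux_mono (q - p) ε (by linarith) (by linarith) hε
    have h3 : 0 ≤ Real.negMulLog (q - p) :=
      Real.negMulLog_nonneg (by linarith) (by linarith)
    rw [show p + (q - p) = q by ring] at h1
    linarith
  · have h1 := aux_pos q (p - q) hq (by linarith)
    have h2 := aux_mono (p - q) ε (by linarith) (by linarith) hε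
    have h3 : 0 ≤ Real.negMulLog (1 - (p - q)) :=
      Real.negMulLog_nonneg (by linarith) (by linarith)
    rw [show q + (p - q) = p by ring] at h1
    linarith

lemma aux_two (p q ε : ℝ) (hp : 0 ≤ p) (hq1 : q ≤ 1) (hpq : p ≤ q)
    (hε : ε ≤ 1 / 2) (h : |p - q| ≤ ε) :
    (Real.negMulLog p + Real.negMulLog (1 - p)) -
      (Real.negMulLog q + Real.negMulLog (1 - q)) ≤ Real.binEntropy ε := by
  have h' := abs_le.1 h
  have h1 := aux_neg p (q - p) hp (by linarith) (by linarith)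
  have h2 := aux_mono (q - p) ε (by linarith) (by linarith) hε
  have h3 := aux_pos (1 - q) (q - p) (by linarith) (by linarith)
  rw [show p + (q - p) = q by ring] at h1
  rw [show 1 - q + (q - p) = 1 - p by ring] at h3
  linarith

lemma aux_ent {Y : Type*} [Fintype Y] (hY : 2 ≤ Fintype.card Y) (p q : Y → ℝ)
    (hp0 : ∀ y, 0 ≤ p y) (hp1 : ∑ y, p y = 1) (hq0 : ∀ y, 0 ≤ q y) (hq1 : ∑ y, q y = 1)
    (ε : ℝ) (hε0 : 0 ≤ ε) (hε1 : ε ≤ 1 / 2) (h : ∀ y, |p y - q y| ≤ ε) :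
    ∑ y, Real.negMulLog (p y) - ∑ y, Real.negMulLog (q y) ≤
      ((Fintype.card Y : ℝ) - 1) * Real.binEntropy ε +
        ((Fintype.card Y : ℝ) - 1) * Real.log ((Fintype.card Y : ℝ) - 1) * ε := by
  classical
  have hple : ∀ y, p y ≤ 1 := fun y => hp1 ▸ single_le_sum (fun i _ => hp0 i) (mem_univ y)
  have hqle : ∀ y, q y ≤ 1 := fun y => hq1 ▸ single_le_sum (fun i _ => hq0 i) (mem_univ y)
  have hne : (univ : Finset Y).Nonempty := by
    rw [← card_pos, card_univ]; omega
  obtain ⟨a, -, ha⟩ := exists_le_of_sum_le hne (show ∑ y, p y ≤ ∑ y, q y by rw [hp1, hq1])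
  rcases hY.eq_or_lt with h2 | h3
  · have hc : (univ.erase a).card = 1 := by
      rw [card_erase_of_mem (mem_univ a), card_univ, ← h2]
    obtain ⟨b, hb⟩ := card_eq_one.1 hc
    have hs : ∀ f : Y → ℝ, ∑ y, f y = f a + f b := by
      intro f
      rw [← add_sum_erase univ f (mem_univ a), hb, sum_singleton]
    rw [hs] at hp1 hq1
    rw [hs, hs, ← h2, show p b = 1 - p a by linarith, show q b = 1 - q a by linarith]
    have := aux_two (p a) (q a) ε (hp0 a) (hqle a) ha hε1 (h a)
    norm_num
    linarith
  · rw [← sum_sub_distrib, ← add_sum_erase univ _ (mem_univ a)]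
    have e1 : ∑ y ∈ univ.erase a, (Real.negMulLog (p y) - Real.negMulLog (q y)) ≤
        ((Fintype.card Y : ℝ) - 1) * Real.binEntropy ε := by
      refine (sum_le_card_nsmul _ _ (Real.binEntropy ε) fun y _ =>
        aux_term _ _ ε (hp0 y) (hq0 y) (hple y) (hqle y) hε1 (h y)).trans ?_
      rw [card_erase_of_mem (mem_univ a), card_univ, nsmul_eq_mul,
        Nat.cast_sub (by omega), Nat.cast_one]
    have e2 : Real.negMulLog (p a) - Real.negMulLog (q a) ≤ ε := by
      have h' := abs_le.1 (h a)
      have h1 := aux_neg (p a) (q a - p a) (hp0 a) (by linarith) (by linarith [hqle a])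
      have h2 := aux_lin (q a - p a) (by linarith)
      rw [show p a + (q a - p a) = q a by ring] at h1
      linarith
    have hn : (2 : ℝ) ≤ (Fintype.card Y : ℝ) - 1 := by
      have : (3 : ℝ) ≤ (Fintype.card Y : ℝ) := by exact_mod_cast h3
      linarith
    have hl : (1 / 2 : ℝ) ≤ Real.log ((Fintype.card Y : ℝ) - 1) := by
      have := Real.log_le_log (by norm_num) hn
      have := Real.log_two_gt_d9
      linarith
    have e3 : 1 * ε ≤ ((Fintype.card Y : ℝ) - 1) * Real.log ((Fintype.card Y : ℝ) - 1) * ε := by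
      apply mul_le_mul_of_nonneg_right _ hε0
      nlinarith
    linarith

lemma aux_ent_abs {Y : Type*} [Fintype Y] (hY : 2 ≤ Fintype.card Y) (p q : Y → ℝ)
    (hp0 : ∀ y, 0 ≤ p y) (hp1 : ∑ y, p y = 1) (hq0 : ∀ y, 0 ≤ q y) (hq1 : ∑ y, q y = 1)
    (ε : ℝ) (hε0 : 0 ≤ ε) (hε1 : ε ≤ 1 / 2) (h : ∀ y, |p y - q y| ≤ ε) :
    |∑ y, Real.negMulLog (p y) - ∑ y, Real.negMulLog (q y)| ≤
      ((Fintype.card Y : ℝ) - 1) * Real.binEntropy ε +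
        ((Fintype.card Y : ℝ) - 1) * Real.log ((Fintype.card Y : ℝ) - 1) * ε := by
  rw [abs_le']
  refine ⟨aux_ent hY p q hp0 hp1 hq0 hq1 ε hε0 hε1 h, ?_⟩
  rw [neg_sub]
  exact aux_ent hY q p hq0 hq1 hp0 hp1 ε hε0 hε1 fun y => by rw [abs_sub_comm]; exact h y

lemma aux_mi {X Y : Type*} [Fintype X] [Fintype Y] (W : X → Y → ℝ)
    (hW0 : ∀ x y, 0 ≤ W x y) (P : X → ℝ) (hP0 : ∀ x, 0 ≤ P x) :
    mutualInfo P W = (∑ y, Real.negMulLog (∑ x, P x * W x y) -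
      ∑ x, P x * ∑ y, Real.negMulLog (W x y)) / Real.log 2 := by
  have hterm : ∀ x y, P x * W x y * Real.logb 2 (W x y / ∑ x', P x' * W x' y) =
      (-(P x * W x y * Real.log (∑ x', P x' * W x' y)) -
        P x * Real.negMulLog (W x y)) / Real.log 2 := by
    intro x y
    by_cases h0 : P x * W x y = 0
    · have : P x * Real.negMulLog (W x y) = -(P x * W x y) * Real.log (W x y) := by
        unfold Real.negMulLog; ring
      rw [this, h0]; simp
    · have hle : P x * W x y ≤ ∑ x', P x' * W x' y :=
        single_le_sum (f := fun x' => P x' * W x' y)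
          (fun i _ => mul_nonneg (hP0 i) (hW0 i y)) (mem_univ x)
      have hpos : 0 < P x * W x y := lt_of_le_of_ne (mul_nonneg (hP0 x) (hW0 x y)) (Ne.symm h0)
      have hW : W x y ≠ 0 := right_ne_zero_of_mul h0
      rw [Real.logb, Real.log_div hW (by linarith)]
      unfold Real.negMulLog
      ring
  unfold mutualInfo
  simp_rw [hterm, ← sum_div, sum_sub_distrib]
  congr 2
  · rw [sum_comm]
    refine sum_congr rfl fun y _ => ?_
    rw [sum_neg_distrib, ← sum_mul, Real.negMulLog]
    ring
  · simp_rw [mul_sum]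

/-- If two channels `W, V` with finite input alphabet `X` and finite
output alphabet `Y`, `|Y| ≥ 2`, satisfy `|W(y|x) − V(y|x)| ≤ ε` for all `(x,y)`,
where `0 ≤ ε ≤ 1/2`, then for every input distribution `P`,
`|I(P,W) − I(P,V)| ≤ 2(|Y|−1)·h_b(ε) + 2(|Y|−1)·log₂(|Y|−1)·ε`. -/
theorem mutualInfo_diff_le_of_close {X Y : Type*} [Fintype X] [Fintype Y]
    (hY : 2 ≤ Fintype.card Y)
    (W V : X → Y → ℝ)
    (hW0 : ∀ x y, 0 ≤ W x y) (hW1 : ∀ x, ∑ y, W x y = 1)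
    (hV0 : ∀ x y, 0 ≤ V x y) (hV1 : ∀ x, ∑ y, V x y = 1)
    (ε : ℝ) (hε0 : 0 ≤ ε) (hε1 : ε ≤ 1 / 2)
    (hclose : ∀ x y, |W x y - V x y| ≤ ε)
    (P : X → ℝ) (hP0 : ∀ x, 0 ≤ P x) (hP1 : ∑ x, P x = 1) :
    |mutualInfo P W - mutualInfo P V| ≤
      2 * ((Fintype.card Y : ℝ) - 1) * binEnt ε +
        2 * ((Fintype.card Y : ℝ) - 1) * Real.logb 2 ((Fintype.card Y : ℝ) - 1) * ε := by
  have hQ0 : ∀ U : X → Y → ℝ, (∀ x y, 0 ≤ U x y) → ∀ y, 0 ≤ ∑ x, P x * U x y :=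
    fun U hU y => sum_nonneg fun x _ => mul_nonneg (hP0 x) (hU x y)
  have hQ1 : ∀ U : X → Y → ℝ, (∀ x, ∑ y, U x y = 1) → ∑ y, ∑ x, P x * U x y = 1 := by
    intro U hU
    rw [sum_comm]
    simp_rw [← mul_sum, hU, mul_one, hP1]
  have hQc : ∀ y, |∑ x, P x * W x y - ∑ x, P x * V x y| ≤ ε := by
    intro y
    rw [← sum_sub_distrib]
    calc |∑ x, (P x * W x y - P x * V x y)| ≤ ∑ x, |P x * W x y - P x * V x y| :=
          abs_sum_le_sum_abs _ _
      _ ≤ ∑ x, P x * ε := by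
          refine sum_le_sum fun x _ => ?_
          rw [← mul_sub, abs_mul, abs_of_nonneg (hP0 x)]
          exact mul_le_mul_of_nonneg_left (hclose x y) (hP0 x)
      _ = ε := by rw [← sum_mul, hP1, one_mul]
  have hA := aux_ent_abs hY _ _ (hQ0 W hW0) (hQ1 W hW1) (hQ0 V hV0) (hQ1 V hV1) ε hε0 hε1 hQc
  set B := ((Fintype.card Y : ℝ) - 1) * Real.binEntropy ε +
        ((Fintype.card Y : ℝ) - 1) * Real.log ((Fintype.card Y : ℝ) - 1) * ε with hB
  have hC : |∑ x, P x * ∑ y, Real.negMulLog (W x y) -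
      ∑ x, P x * ∑ y, Real.negMulLog (V x y)| ≤ B := by
    rw [← sum_sub_distrib]
    calc _ ≤ ∑ x, |P x * ∑ y, Real.negMulLog (W x y) - P x * ∑ y, Real.negMulLog (V x y)| :=
          abs_sum_le_sum_abs _ _
      _ ≤ ∑ x, P x * B := by
          refine sum_le_sum fun x _ => ?_
          rw [← mul_sub, abs_mul, abs_of_nonneg (hP0 x)]
          exact mul_le_mul_of_nonneg_left (aux_ent_abs hY _ _ (hW0 x) (hW1 x) (hV0 x) (hV1 x)
            ε hε0 hε1 (hclose x)) (hP0 x)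
      _ = B := by rw [← sum_mul, hP1, one_mul]
  have hl2 : 0 < Real.log 2 := Real.log_pos (by norm_num)
  have hR : 2 * ((Fintype.card Y : ℝ) - 1) * binEnt ε +
        2 * ((Fintype.card Y : ℝ) - 1) * Real.logb 2 ((Fintype.card Y : ℝ) - 1) * ε =
        2 * B / Real.log 2 := by
    rw [hB, Real.binEntropy_eq_negMulLog_add_negMulLog_one_sub]
    unfold binEnt Real.negMulLog Real.logb
    ring
  rw [hR, aux_mi W hW0 P hP0, aux_mi V hV0 P hP0, ← sub_div, abs_div, abs_of_pos hl2]
  apply div_le_div_of_nonneg_right _ hl2.le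
  rw [abs_le] at hA hC ⊢
  constructor <;> linarith [hA.1, hA.2, hC.1, hC.2]
end

section
/- Let X be a finite set and let P be a rational-valued probability distribution on X with p₀ = min_{x∈X} P(x) > 0. Then there exist a finite constant η = η(P) and a threshold n₁ such that for every n ≥ n₁ for which n·P(x) is an integer for every x ∈ X, and for every positive integer M, one has |T_n(P)|^M ≥ exp(−η·M·log n) · |T_{Mn}(P)|, where |T_k(P)| = k! / ∏_{x∈X} (k·P(x))! is the number of sequences in X^k whose empirical distribution equals P. -/
open Finset

/-- The number of length-`k` sequences over `X` of type `P`, i.e. the multinomial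
coefficient `k! / ∏_x (k·P(x))!`.  Here the count of symbol `x` is recovered as the
natural number `((k : ℚ) * P x).num.toNat`, which equals `k·P(x)` whenever
`k·P(x)` is a (nonnegative) integer. -/
def typeClassCard {X : Type*} [Fintype X] (P : X → ℚ) (k : ℕ) : ℕ :=
  Nat.factorial k / ∏ x, Nat.factorial (((k : ℚ) * P x).num.toNat)

lemma fact_upper (k : ℕ) (hk : 1 ≤ k) :
    (Nat.factorial k : ℝ) ≤ Real.exp 1 * k * ((k : ℝ) ^ k * Real.exp (-k)) := by
  induction k, hk using Nat.le_induction with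
  | base => simp [← Real.exp_add]
  | succ k hk ih =>
    have hk0 : (0 : ℝ) < k := by exact_mod_cast hk
    have h1 : ((k : ℝ) / (k + 1)) ^ (k + 1) ≤ Real.exp (-1) := by
      have h2 : (k : ℝ) / (k + 1) ≤ Real.exp (-(1 / (k + 1))) := by
        have := Real.add_one_le_exp (-(1 / ((k : ℝ) + 1)))
        have e : (k : ℝ) / (k + 1) = -(1 / ((k : ℝ) + 1)) + 1 := by field_simp; ring
        rw [e]; exact this
      calc ((k : ℝ) / (k + 1)) ^ (k + 1) ≤ (Real.exp (-(1 / (k + 1)))) ^ (k + 1) := by gcongr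
        _ = Real.exp (-1) := by
          rw [← Real.exp_nat_mul]; congr 1; push_cast; field_simp
    rw [div_pow, div_le_iff₀ (by positivity)] at h1
    rw [Nat.factorial_succ]
    push_cast
    have e2 : Real.exp (-((k : ℝ) + 1)) = Real.exp (-k) * Real.exp (-1) := by
      rw [← Real.exp_add]; congr 1; ring
    calc ((k : ℝ) + 1) * (Nat.factorial k : ℝ)
        ≤ (k + 1) * (Real.exp 1 * k * ((k : ℝ) ^ k * Real.exp (-k))) := by gcongr
      _ = (k + 1) * Real.exp 1 * Real.exp (-k) * (k : ℝ) ^ (k + 1) := by ring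
      _ ≤ (k + 1) * Real.exp 1 * Real.exp (-k) * (Real.exp (-1) * ((k : ℝ) + 1) ^ (k + 1)) := by
        gcongr
      _ = _ := by rw [e2]; ring

lemma fact_lower (k : ℕ) : (k : ℝ) ^ k * Real.exp (-k) ≤ Nat.factorial k := by
  have h := Real.pow_div_factorial_le_exp (k : ℝ) (by positivity) k
  rw [div_le_iff₀ (by positivity)] at h
  rw [Real.exp_neg, ← div_eq_mul_inv, div_le_iff₀ (by positivity)]
  linarith

lemma multi_upper {X : Type*} [Fintype X] (p : X → ℝ) (hp : ∀ x, 0 ≤ p x)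
    (hs : ∑ x, p x = 1) (b : X → ℕ) :
    (Nat.multinomial univ b : ℝ) * ∏ x, p x ^ b x ≤ 1 := by
  classical
  have h := Finset.sum_pow_eq_sum_piAntidiag (univ : Finset X) p (∑ x, b x)
  rw [hs, one_pow] at h
  rw [h]
  exact Finset.single_le_sum (f := fun k : X → ℕ => (Nat.multinomial univ k : ℝ) * ∏ x, p x ^ k x)
    (fun k _ => mul_nonneg (by positivity) (Finset.prod_nonneg fun x _ => pow_nonneg (hp x) _))
    (by simp)

lemma multi_lower {X : Type*} [Fintype X] (p : X → ℝ) (n : ℕ) (hn : 1 ≤ n) (a : X → ℕ)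
    (ha : ∀ x, 1 ≤ a x) (hap : ∀ x, (a x : ℝ) = n * p x) (hs : ∑ x, a x = n) :
    1 ≤ (Real.exp 1 * n) ^ (Fintype.card X) *
      ((Nat.multinomial univ a : ℝ) * ∏ x, p x ^ a x) := by
  have hn0 : (0 : ℝ) < n := by exact_mod_cast hn
  have hp : ∀ x, 0 < p x := fun x => by
    have h1 : (0 : ℝ) < a x := by exact_mod_cast ha x
    rw [hap] at h1
    exact (mul_pos_iff_of_pos_left hn0).1 h1
  have hspec : (∏ x, (Nat.factorial (a x) : ℝ)) * Nat.multinomial univ a = Nat.factorial n := by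
    have := Nat.multinomial_spec (univ : Finset X) a
    rw [hs] at this
    exact_mod_cast this
  have hle : ∀ x, a x ≤ n := fun x => by
    rw [← hs]; exact Finset.single_le_sum (fun _ _ => Nat.zero_le _) (mem_univ x)
  have hprod : (∏ x, (Nat.factorial (a x) : ℝ)) ≤
      (Real.exp 1 * n) ^ (Fintype.card X) * ((n : ℝ) ^ n * Real.exp (-n) * ∏ x, p x ^ a x) := by
    calc (∏ x, (Nat.factorial (a x) : ℝ))
        ≤ ∏ x, ((Real.exp 1 * n) * ((n : ℝ) ^ a x * Real.exp (-(a x : ℝ)) * p x ^ a x)) := by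
          apply Finset.prod_le_prod (fun _ _ => by positivity)
          intro x _
          have h1 := fact_upper (a x) (ha x)
          have h2 : (a x : ℝ) ≤ n := by exact_mod_cast hle x
          have h3 : (a x : ℝ) ^ a x = (n : ℝ) ^ a x * p x ^ a x := by
            rw [← mul_pow, ← hap]
          have h4 := hp x
          calc _ ≤ _ := h1
            _ ≤ Real.exp 1 * n * ((a x : ℝ) ^ a x * Real.exp (-(a x : ℝ))) := by gcongr
            _ = _ := by rw [h3]; ring
      _ = _ := by
          rw [Finset.prod_mul_distrib, Finset.prod_const, Finset.prod_mul_distrib,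
            Finset.prod_mul_distrib, Finset.prod_pow_eq_pow_sum, hs, ← Real.exp_sum,
            Finset.sum_neg_distrib, ← Nat.cast_sum, hs, Finset.card_univ]
  have hpp : (0 : ℝ) < ∏ x, p x ^ a x := Finset.prod_pos fun x _ => pow_pos (hp x) _
  have hF : (0 : ℝ) < ∏ x, (Nat.factorial (a x) : ℝ) :=
    Finset.prod_pos fun x _ => by positivity
  have hlow := fact_lower n
  refine le_of_mul_le_mul_left ?_ hF
  calc _ ≤ (Real.exp 1 * n) ^ (Fintype.card X) *
          ((n : ℝ) ^ n * Real.exp (-n) * ∏ x, p x ^ a x) := by rw [mul_one]; exact hprod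
    _ ≤ (Real.exp 1 * n) ^ (Fintype.card X) * ((Nat.factorial n : ℝ) * ∏ x, p x ^ a x) := by
        gcongr
    _ = _ := by rw [← hspec]; ring

/-- For a rational-valued probability distribution `P` on a finite set `X`
with `min_x P(x) > 0`, there are a constant `η = η(P) < ∞` and a threshold `n₁` such
that for all `n ≥ n₁` with `n·P(x) ∈ ℕ` for every `x` (expressed via the denominator
of `n·P(x)` being `1`) and every positive integer `M`,
`|T_n(P)|^M ≥ exp(−η·M·log n) · |T_{Mn}(P)|`. -/
theorem typeClassCard_pow_ge {X : Type*} [Fintype X] [Nonempty X]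
    (P : X → ℚ)
    (hpos : ∀ x, 0 < P x) (hsum : ∑ x, P x = 1) :
    ∃ η : ℝ, ∃ n₁ : ℕ, ∀ n : ℕ, n₁ ≤ n →
      (∀ x, ((n : ℚ) * P x).den = 1) →
      ∀ M : ℕ, 0 < M →
        ((typeClassCard P n : ℝ)) ^ M ≥
          Real.exp (-(η * M * Real.log n)) * (typeClassCard P (M * n) : ℝ) := by
  refine ⟨2 * Fintype.card X, 3, fun n hn hden M hM => ?_⟩
  have hn0 : (0 : ℝ) < n := by exact_mod_cast (by omega : 0 < n)
  have hnq : (0 : ℚ) < n := by exact_mod_cast (by omega : 0 < n)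
  set a : X → ℕ := fun x => ((n : ℚ) * P x).num.toNat with hadef
  have haq : ∀ x, (a x : ℚ) = n * P x := fun x => by
    have h1 : (((n : ℚ) * P x).num : ℚ) = n * P x := by
      conv_rhs => rw [← Rat.num_div_den ((n : ℚ) * P x), hden x]
      simp
    have h2 : 0 ≤ ((n : ℚ) * P x).num := Rat.num_nonneg.2 (mul_pos hnq (hpos x)).le
    have h3 : ((a x : ℕ) : ℤ) = ((n : ℚ) * P x).num := Int.toNat_of_nonneg h2
    rw [← h1, ← h3]; simp
  have hMa : ∀ x, (((M * n : ℕ) : ℚ) * P x).num.toNat = M * a x := fun x => by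
    have : ((M * n : ℕ) : ℚ) * P x = ((M * a x : ℕ) : ℚ) := by
      push_cast; rw [haq]; ring
    rw [this, Rat.num_natCast, Int.toNat_natCast]
  have has : ∑ x, a x = n := by
    have : ((∑ x, a x : ℕ) : ℚ) = n := by
      push_cast
      simp_rw [haq]
      rw [← Finset.mul_sum, hsum, mul_one]
    exact_mod_cast this
  have ha1 : ∀ x, 1 ≤ a x := fun x => by
    have : (0 : ℚ) < a x := by rw [haq]; exact mul_pos hnq (hpos x)
    exact_mod_cast this
  have hTn : typeClassCard P n = Nat.multinomial univ a := by
    unfold typeClassCard Nat.multinomial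
    rw [has]
  have hTM : typeClassCard P (M * n) = Nat.multinomial univ (fun x => M * a x) := by
    unfold typeClassCard Nat.multinomial
    simp_rw [hMa]
    rw [← Finset.mul_sum, has]
  rw [hTn, hTM]
  have hp : ∀ x, (0 : ℝ) < (P x : ℝ) := fun x => by exact_mod_cast hpos x
  have hU := multi_upper (fun x => (P x : ℝ)) (fun x => (hp x).le)
    (by exact_mod_cast hsum) (fun x => M * a x)
  have hL := multi_lower (fun x => (P x : ℝ)) n (by omega) a ha1
    (fun x => by exact_mod_cast haq x) has
  set Q : ℝ := ∏ x, (P x : ℝ) ^ a x with hQ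
  have hQ0 : 0 < Q := Finset.prod_pos fun x _ => pow_pos (hp x) _
  have hQM : ∏ x, (P x : ℝ) ^ (M * a x) = Q ^ M := by
    rw [hQ, ← Finset.prod_pow]
    exact Finset.prod_congr rfl fun x _ => by rw [mul_comm, pow_mul]
  simp only [hQM] at hU
  have hexp : Real.exp (-(2 * (Fintype.card X : ℝ) * M * Real.log n))
      = (((n : ℝ) ^ 2) ^ Fintype.card X)⁻¹ ^ M := by
    rw [Real.exp_neg, inv_pow, ← pow_mul, ← pow_mul]
    congr 1
    conv_rhs => rw [← Real.exp_log hn0]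
    rw [← Real.exp_nat_mul]
    congr 1; push_cast; ring
  have hen : Real.exp 1 * n ≤ (n : ℝ) ^ 2 := by
    have h3 : (3 : ℝ) ≤ n := by exact_mod_cast hn
    have := Real.exp_one_lt_three
    nlinarith
  have hL2 : (((n : ℝ) ^ 2) ^ Fintype.card X)⁻¹ ≤ (Nat.multinomial univ a : ℝ) * Q := by
    rw [inv_le_iff_one_le_mul₀' (by positivity)]
    refine hL.trans ?_
    gcongr
  rw [hexp, ge_iff_le]
  refine le_of_mul_le_mul_right ?_ (pow_pos hQ0 M)
  rw [← mul_pow]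
  calc _ = (((n : ℝ) ^ 2) ^ Fintype.card X)⁻¹ ^ M *
        ((Nat.multinomial univ (fun x => M * a x) : ℝ) * Q ^ M) := by ring
    _ ≤ (((n : ℝ) ^ 2) ^ Fintype.card X)⁻¹ ^ M * 1 := by gcongr
    _ ≤ _ := by rw [mul_one]; gcongr
end
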